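/- There exists an infinite compact Hausdorff topological space X that is separable, extremally disconnected, and rigid (the identity is the only homeomorphism of X onto itself), such that for every separable real Banach space E, the Banach algebra C(X,ℝ) is not isomorphic as a ring to the Calkin algebra B(E)/K(E). -/

import Mathlib

open Cardinal TopologicalSpace

/-- The two-sided ideal of compact operators in `B(E)`, the algebra of bounded linear
operators on `E`. -/
def compactIdeal (𝕜 : Type*) [NontriviallyNormedField 𝕜]
    (E : Type*) [NormedAddCommGroup E] [NormedSpace 𝕜 E] : TwoSidedIdeal (E →L[𝕜] E) :=
  TwoSidedIdeal.mk' {f : E →L[𝕜] E | IsCompactOperator f}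
    isCompactOperator_zero
    (fun hf hg => hf.add hg)
    (fun hf => hf.neg)
    (fun {f _} hg => hg.clm_comp f)
    (fun {_ g} hf => hf.comp_clm g)

/-- The Calkin algebra `B(E)/K(E)`, as a quotient ring. -/
def Calkin (𝕜 : Type*) [NontriviallyNormedField 𝕜]
    (E : Type*) [NormedAddCommGroup E] [NormedSpace 𝕜 E] : Type _ :=
  (compactIdeal 𝕜 E).ringCon.Quotient

noncomputable instance (𝕜 : Type*) [NontriviallyNormedField 𝕜]
    (E : Type*) [NormedAddCommGroup E] [NormedSpace 𝕜 E] : Ring (Calkin 𝕜 E) :=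
  inferInstanceAs (Ring (compactIdeal 𝕜 E).ringCon.Quotient)

/-!
By Kunen, the remainder of a countable discrete space contains more than `𝔠` weak P-points that are
pairwise inequivalent in the Rudin–Keisler order: an ultrafilter is built in `𝔠` steps that meet one
requirement each, while a `𝔠`-by-`𝔠` linked matrix loses only finitely many of its independent rows
at every step.

Given a free ultrafilter `p s` for each finite sequence `s`, topologize the tree of finite
sequences so that `s` is the limit of its children along `p s`. This tree is countable and
extremally disconnected, hence its Stone–Čech compactification is separable and extremally
disconnected. If every `p s` is a weak P-point, then no node is in the closure of a countable set
containing no nodes: a point of such a set either lies in a last cone of the tree, where the weak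
P-point at its vertex applies, or follows an infinite branch, and countably many branches can be
avoided by diagonalization. It follows that a homeomorphism between two such spaces maps a dense
set of nodes to nodes, and wherever `s` is mapped to `t` it matches the children of `s` with those
of `t`, so that `p s` and `q t` are Rudin–Keisler equivalent. Inequivalent ultrafilters at
different nodes therefore make the space rigid, and disjoint supplies of ultrafilters give more than
`𝔠` pairwise non-homeomorphic spaces.

On the other hand a separable Banach space is determined up to isomorphism by the distances within a
dense sequence, so there are at most `𝔠` Calkin algebras, while the ring `C(X, ℝ)` determines `X`.
-/

section WeakPPoints

open Filter Set

universe u v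

/-- Kunen's linked matrices: rows are indexed by `ι` and, in each row, any `n + 1` distinct entries
of level `n` have finite intersection. -/
structure LinkedMatrix (ι κ S : Type*) where
  cell : ι → κ → ℕ → Set S
  cell_mono (i : ι) (x : κ) : Monotone (cell i x)
  finite_biInter_cell (i : ι) (n : ℕ) (σ : Finset κ) :
    n < σ.card → (⋂ x ∈ σ, cell i x n).Finite

/-- The property of a filter `F` which, for an ultrafilter and all sequences `C` at once, says that
it is a `κ`-OK point of Kunen: if every `C n` is compatible with `F`, then `F` has `κ` members any
`n + 1` of which intersect inside `C n` up to a finite set. -/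
def IsOKAlong {S : Type*} (κ : Type*) (F : Filter S) (C : ℕ → Set S) : Prop :=
  (∃ n, (C n)ᶜ ∈ F) ∨ ∃ D : κ → Set S, (∀ x, D x ∈ F) ∧
    ∀ (n : ℕ) (σ : Finset κ), n < σ.card → ((⋂ x ∈ σ, D x) \ C n).Finite

theorem IsOKAlong.mono {S κ : Type*} {F G : Filter S} {C : ℕ → Set S} (hGF : G ≤ F) :
    IsOKAlong κ F C → IsOKAlong κ G C
  | .inl ⟨n, hn⟩ => .inl ⟨n, hGF hn⟩
  | .inr ⟨D, hD, hfin⟩ => .inr ⟨D, fun x => hGF (hD x), hfin⟩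

theorem mem_inf_iInf_principal_of_antitone {S : Type*} {F : Filter S} {C : ℕ → Set S}
    (hC : Antitone C) {X : Set S} :
    X ∈ F ⊓ ⨅ n, 𝓟 (C n) ↔ ∃ n, X ∈ F ⊓ 𝓟 (C n) := by
  have hdir : Directed (· ≥ ·) fun n => F ⊓ 𝓟 (C n) :=
    directed_of_isDirected_le fun m n hmn => inf_le_inf_left F (principal_mono.2 (hC hmn))
  rw [inf_iInf, mem_iInf_of_directed hdir]

namespace LinkedMatrix

section Independence

variable {ι κ S : Type*} (M : LinkedMatrix ι κ S)

/-- The intersection of the chosen entries `σ i` of the rows `i ∈ a`, taken in each row at the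
lowest level at which linkedness allows it to be infinite. -/
def box (a : Finset ι) (σ : ι → Finset κ) : Set S :=
  ⋂ i ∈ a, ⋂ x ∈ σ i, M.cell i x (σ i).card

/-- The rows of `M` outside `J` are independent modulo the filter `F`. -/
structure IsIndependent (F : Filter S) (J : Set ι) : Prop where
  le_cofinite : F ≤ cofinite
  inter_box_nonempty {X : Set S} (hX : X ∈ F) {a : Finset ι} (ha : Disjoint (a : Set ι) J)
    (σ : ι → Finset κ) : (X ∩ M.box a σ).Nonempty

/-- A property of filters, inherited by finer filters, that can be forced at the cost of finitely
many rows of `M`. -/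
structure IsForceable (P : Filter S → Prop) : Prop where
  mono {F G : Filter S} (hGF : G ≤ F) : P F → P G
  exists_le {F : Filter S} {J : Set ι} (hF : M.IsIndependent F J) (hJ : Jᶜ.Nonempty) :
    ∃ G ≤ F, ∃ j : Finset ι, M.IsIndependent G (J ∪ j) ∧ P G

variable {M} {F G : Filter S} {J J' : Set ι}

theorem mem_box {a : Finset ι} {σ : ι → Finset κ} {s : S} :
    s ∈ M.box a σ ↔ ∀ i ∈ a, ∀ x ∈ σ i, s ∈ M.cell i x (σ i).card := by
  simp only [box, mem_iInter]

theorem box_union_piecewise [DecidableEq ι] {a b : Finset ι} (hab : Disjoint a b)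
    (σ τ : ι → Finset κ) : M.box (a ∪ b) (a.piecewise σ τ) = M.box a σ ∩ M.box b τ := by
  have hσ : ∀ i ∈ a, a.piecewise σ τ i = σ i := fun i hi => a.piecewise_eq_of_mem _ _ hi
  have hτ : ∀ i ∈ b, a.piecewise σ τ i = τ i := fun i hi =>
    a.piecewise_eq_of_notMem _ _ (Finset.disjoint_right.1 hab hi)
  ext s
  simp +contextual only [mem_inter_iff, mem_box, Finset.forall_mem_union, hσ, hτ]

theorem IsIndependent.mono (h : M.IsIndependent F J) (hJ : J ⊆ J') : M.IsIndependent F J' :=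
  ⟨h.le_cofinite, fun hX _ ha => h.inter_box_nonempty hX (ha.mono_right hJ)⟩

theorem IsIndependent.neBot (h : M.IsIndependent F J) : F.NeBot :=
  forall_mem_nonempty_iff_neBot.1 fun _ hX =>
    (h.inter_box_nonempty hX (a := ∅) (by simp) fun _ => ∅).left

theorem IsIndependent.of_forall_mem (hF : F ≤ cofinite)
    (h : ∀ X ∈ F, ∃ G, M.IsIndependent G J ∧ X ∈ G) : M.IsIndependent F J where
  le_cofinite := hF
  inter_box_nonempty hX _ ha σ :=
    let ⟨_, hG, hXG⟩ := h _ hX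
    hG.inter_box_nonempty hXG ha σ

theorem IsIndependent.cofinite_inf_iInf {τ : Type*} {G : τ → Filter S}
    (h₀ : M.IsIndependent cofinite J) (hdir : Directed (· ≥ ·) G)
    (hG : ∀ t, M.IsIndependent (G t) J) : M.IsIndependent (cofinite ⊓ ⨅ t, G t) J := by
  rcases isEmpty_or_nonempty τ with _ | ⟨⟨t₀⟩⟩
  · rwa [iInf_of_empty, inf_top_eq]
  · have hle : ⨅ t, G t ≤ cofinite := (iInf_le G t₀).trans (hG t₀).le_cofinite
    rw [inf_eq_right.2 hle]
    have : Nonempty τ := ⟨t₀⟩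
    refine .of_forall_mem hle fun X hX => ?_
    obtain ⟨t, ht⟩ := (mem_iInf_of_directed hdir X).1 hX
    exact ⟨G t, hG t, ht⟩

theorem IsIndependent.inf_principal_box (h : M.IsIndependent F J) {a : Finset ι}
    (ha : Disjoint (a : Set ι) J) (σ : ι → Finset κ) :
    M.IsIndependent (F ⊓ 𝓟 (M.box a σ)) (J ∪ a) where
  le_cofinite := inf_le_left.trans h.le_cofinite
  inter_box_nonempty {X} hX b hb τ := by
    classical
    obtain ⟨hbJ, hba⟩ := disjoint_union_right.1 hb
    have hab : Disjoint ((a ∪ b : Finset ι) : Set ι) J := by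
      simpa only [Finset.coe_union] using disjoint_union_left.2 ⟨ha, hbJ⟩
    obtain ⟨s, hsX, hs⟩ := h.inter_box_nonempty (mem_inf_principal.1 hX) hab (a.piecewise σ τ)
    rw [box_union_piecewise (Finset.disjoint_coe.1 hba.symm)] at hs
    exact ⟨s, hsX hs.1, hs.2⟩

theorem IsIndependent.inf_iInf_principal_linked (h : M.IsIndependent F J) {C : ℕ → Set S}
    (hC : Antitone C) (hCF : ∀ n, C n ∈ F) {i : ι} (hi : i ∉ J) :
    M.IsIndependent (F ⊓ ⨅ x, 𝓟 {s | ∀ n, s ∈ C n ∨ s ∈ M.cell i x n}) (J ∪ {i}) := by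
  refine .of_forall_mem (inf_le_left.trans h.le_cofinite) fun X hX => ?_
  obtain ⟨Y, hY, Z, hZ, rfl⟩ := mem_inf_iff.1 hX
  obtain ⟨t, ht⟩ := (mem_iInf_finite _).1 hZ
  rw [iInf_principal_finset, mem_principal] at ht
  refine ⟨F ⊓ 𝓟 (M.box {i} fun _ => t), ?_, ?_⟩
  · simpa using h.inf_principal_box (a := {i}) (by simpa using hi) fun _ => t
  rw [mem_inf_principal]
  filter_upwards [hY, hCF t.card] with s hsY hsC hs
  refine ⟨hsY, ht (mem_iInter₂.2 fun x hx n => ?_)⟩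
  rcases le_total n t.card with hn | hn
  · exact .inl (hC hn hsC)
  · exact .inr (M.cell_mono i x hn (mem_box.1 hs i (Finset.mem_singleton_self i) x hx))

variable (M)

-- If the rows stay independent once all `C n` are added to `F`, a single row `i` supplies the
-- required sets; otherwise a box over finitely many rows already excludes some `C n`.
theorem isForceable_isOKAlong {C : ℕ → Set S} (hC : Antitone C) :
    M.IsForceable (IsOKAlong κ · C) where
  mono hGF := IsOKAlong.mono hGF
  exists_le {F J} hF hJ := by
    let F₁ := F ⊓ ⨅ n, 𝓟 (C n)
    have hle : F₁ ≤ cofinite := inf_le_left.trans hF.le_cofinite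
    by_cases hind : M.IsIndependent F₁ J
    · obtain ⟨i, hi⟩ := hJ
      have hCF (n : ℕ) : C n ∈ F₁ := mem_inf_of_right (mem_iInf_of_mem n (mem_principal_self _))
      let D : κ → Set S := fun x => {s | ∀ n, s ∈ C n ∨ s ∈ M.cell i x n}
      refine ⟨F₁ ⊓ ⨅ x, 𝓟 (D x), inf_le_left.trans inf_le_left, {i}, ?_,
        .inr ⟨D, fun x => ?_, fun n σ hσ => ?_⟩⟩
      · simpa using hind.inf_iInf_principal_linked hC hCF hi
      · exact mem_inf_of_right (mem_iInf_of_mem x (mem_principal_self _))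
      · refine (M.finite_biInter_cell i n σ hσ).subset fun s ⟨hs, hsC⟩ => ?_
        exact mem_iInter₂.2 fun x hx => (mem_iInter₂.1 hs x hx n).resolve_left hsC
    · obtain ⟨X, hX, a, ha, σ, hempty⟩ : ∃ X ∈ F₁, ∃ a : Finset ι, Disjoint (a : Set ι) J ∧
          ∃ σ, ¬(X ∩ M.box a σ).Nonempty := by
        by_contra! hcon
        exact hind ⟨hle, fun hX _ ha σ => hcon _ hX _ ha σ⟩
      obtain ⟨n, hn⟩ := (mem_inf_iInf_principal_of_antitone hC).1 hX
      refine ⟨_, inf_le_left, a, hF.inf_principal_box ha σ, .inl ⟨n, ?_⟩⟩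
      rw [mem_inf_principal] at hn ⊢
      filter_upwards [hn] with s hsX hsbox hsC
      exact hempty ⟨s, hsX hsC, hsbox⟩

theorem exists_cell_notMem_ultrafilter [Nontrivial κ] (i : ι) {r : Ultrafilter S}
    (hr : (r : Filter S) ≤ cofinite) : ∃ x, M.cell i x 1 ∉ r := by
  classical
  by_contra! hcon
  obtain ⟨x, y, hxy⟩ := exists_pair_ne κ
  have hfin : (M.cell i x 1 ∩ M.cell i y 1).Finite := by
    simpa using M.finite_biInter_cell i 1 {x, y} (by simp [Finset.card_pair hxy])
  exact compl_notMem (inter_mem (hcon x) (hcon y)) (hr hfin.compl_mem_cofinite)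

theorem isForceable_exists_mem_notMem [Nontrivial κ] {r : Ultrafilter S}
    (hr : (r : Filter S) ≤ cofinite) : M.IsForceable fun F => ∃ X ∈ F, X ∉ r where
  mono := fun hGF ⟨X, hX, hXr⟩ => ⟨X, hGF hX, hXr⟩
  exists_le := fun hF ⟨i, hi⟩ => by
    obtain ⟨x, hx⟩ := M.exists_cell_notMem_ultrafilter i hr
    refine ⟨_, inf_le_left, {i}, hF.inf_principal_box (a := {i}) (by simpa using hi) fun _ => {x},
      M.cell i x 1, mem_inf_of_right ?_, hx⟩
    simp [box]

end Independence

section Forcing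

variable {ι : Type u} {τ : Type v} {κ S : Type*} {M : LinkedMatrix ι κ S}

theorem nonempty_compl_iUnion_finset (hι : ℵ₀ < #ι) (hτ : lift.{u} #τ < lift.{v} #ι)
    (j : τ → Finset ι) : (⋃ t, (j t : Set ι))ᶜ.Nonempty := by
  have hlt : lift.{v} #(⋃ t, (j t : Set ι)) < lift.{v} #ι := by
    refine (mk_iUnion_le_lift _).trans_lt (mul_lt_of_lt ?_ hτ ?_)
    · simpa using hι.le
    · refine lt_of_le_of_lt (ciSup_le' fun t => ?_) (aleph0_lt_lift.2 hι)
      simp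
  rw [nonempty_compl]
  rintro huniv
  simp [huniv] at hlt

theorem IsIndependent.exists_antitone_of_forall_isForceable [LinearOrder τ] [WellFoundedLT τ]
    (hM : M.IsIndependent cofinite ∅) (hι : ℵ₀ < #ι)
    (hτ : ∀ t : τ, lift.{u} #(Iio t) < lift.{v} #ι) {P : τ → Filter S → Prop}
    (hP : ∀ t, M.IsForceable (P t)) :
    ∃ G : τ → Filter S, Antitone G ∧ ∀ t, M.IsIndependent (G t) univ ∧ P t (G t) := by
  have hnext (t : τ) (F : Filter S) (J : Set ι) : ∃ q : Filter S × Finset ι, q.1 ≤ F ∧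
      (M.IsIndependent F J → Jᶜ.Nonempty → M.IsIndependent q.1 (J ∪ q.2) ∧ P t q.1) := by
    by_cases h : M.IsIndependent F J ∧ Jᶜ.Nonempty
    · obtain ⟨G, hGF, j, hG⟩ := (hP t).exists_le h.1 h.2
      exact ⟨(G, j), hGF, fun _ _ => hG⟩
    · exact ⟨(F, ∅), le_rfl, fun hF hJ => absurd ⟨hF, hJ⟩ h⟩
  choose next hnext_le hnext using hnext
  obtain ⟨f, hf⟩ : ∃ f : τ → Filter S × Finset ι, ∀ t, f t = next t
      (cofinite ⊓ ⨅ s : Iio t, (f s).1) (⋃ s : Iio t, ((f s).2 : Set ι)) :=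
    ⟨wellFounded_lt.fix fun t f => next t (cofinite ⊓ ⨅ s : Iio t, (f s s.2).1)
      (⋃ s : Iio t, ((f s s.2).2 : Set ι)), fun t => wellFounded_lt.fix_eq _ t⟩
  have hanti : Antitone fun t => (f t).1 := antitone_iff_forall_lt.2 fun s t hst => by
    rw [hf t]
    exact (hnext_le ..).trans
      (inf_le_right.trans (iInf_le (fun s : Iio t => (f s).1) ⟨s, hst⟩))
  have hforced (t : τ) :
      M.IsIndependent (f t).1 ((⋃ s : Iio t, ((f s).2 : Set ι)) ∪ (f t).2) ∧ P t (f t).1 := by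
    induction t using WellFoundedLT.induction with
    | _ t ih =>
      have hbelow : M.IsIndependent (cofinite ⊓ ⨅ s : Iio t, (f s).1)
          (⋃ s : Iio t, ((f s).2 : Set ι)) := by
        refine (hM.mono (empty_subset _)).cofinite_inf_iInf
          (directed_of_isDirected_le fun s s' h => hanti h) fun s => (ih s s.2).1.mono ?_
        refine union_subset (iUnion_subset fun r => ?_)
          (subset_iUnion (fun s : Iio t => ((f s).2 : Set ι)) s)
        exact subset_iUnion (fun s : Iio t => ((f s).2 : Set ι)) ⟨r, r.2.trans s.2⟩
      have := hnext t _ _ hbelow (nonempty_compl_iUnion_finset hι (hτ t) _)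
      rwa [← hf t] at this
  exact ⟨_, hanti, fun t => ⟨(hforced t).1.mono (subset_univ _), (hforced t).2⟩⟩

theorem IsIndependent.exists_ultrafilter_of_forall_isForceable [Nonempty τ]
    (hM : M.IsIndependent cofinite ∅) (hι : ℵ₀ < #ι) (hτ : lift.{u} #τ ≤ lift.{v} #ι)
    {P : τ → Filter S → Prop} (hP : ∀ t, M.IsForceable (P t)) :
    ∃ p : Ultrafilter S, (p : Filter S) ≤ cofinite ∧ ∀ t, P t p := by
  obtain ⟨_, _, hord⟩ := exists_ord_eq_type_lt τ
  have hIio (t : τ) : lift.{u} #(Iio t) < lift.{v} #ι :=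
    (lift_lt.2 (mk_Iio_lt t hord)).trans_le hτ
  obtain ⟨G, hanti, hG⟩ := hM.exists_antitone_of_forall_isForceable hι hIio hP
  have : (⨅ t, G t).NeBot := iInf_neBot_of_directed' (directed_of_isDirected_le hanti)
    fun t => (hG t).1.neBot
  have hle (t : τ) : (Ultrafilter.of (⨅ t, G t) : Filter S) ≤ G t :=
    (Ultrafilter.of_le _).trans (iInf_le G t)
  exact ⟨Ultrafilter.of (⨅ t, G t),
    (hle (Classical.arbitrary τ)).trans (hG (Classical.arbitrary τ)).1.le_cofinite,
    fun t => (hP t).mono (hle t) (hG t).2⟩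

end Forcing

end LinkedMatrix

section KunenMatrix

/-- The countable index set of Kunen's independent linked matrix: a level `k` together with a choice
of finite sets of truncations at level `k`. -/
abbrev KunenIndex : Type :=
  Σ k : ℕ, (Fin k → Bool) → Finset (Fin k → Bool)

/-- The first `k` terms of a binary sequence. -/
def truncate (k : ℕ) (α : ℕ → Bool) : Fin k → Bool := fun i => α i

theorem eventually_injOn_truncate (a : Finset (ℕ → Bool)) :
    ∀ᶠ k in atTop, InjOn (truncate k) (a : Set (ℕ → Bool)) := by
  have hpair (α β : ℕ → Bool) : ∀ᶠ k in atTop, truncate k α = truncate k β → α = β := by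
    by_cases hαβ : α = β
    · simp [hαβ]
    · obtain ⟨i, hi⟩ := Function.ne_iff.1 hαβ
      filter_upwards [eventually_gt_atTop i] with k hk heq
      exact absurd (congrFun heq ⟨i, hk⟩) hi
  have hall : ∀ᶠ k in atTop, ∀ α ∈ a, ∀ β ∈ a, truncate k α = truncate k β → α = β :=
    (eventually_all_finset a).2 fun α _ => (eventually_all_finset a).2 fun β _ => hpair α β
  exact hall.mono fun k hk α hα β hβ => hk α hα β hβ

theorem KunenIndex.finite_setOf_fst_lt (k : ℕ) : {x : KunenIndex | x.1 < k}.Finite := by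
  refine ((finite_Iio k).biUnion fun n _ => finite_range (Sigma.mk n)).subset fun x hx => ?_
  exact mem_biUnion (show x.1 ∈ Iio k from hx) ⟨x.2, rfl⟩

theorem KunenIndex.eventually_forall_mk_mem {X : Set KunenIndex} (hX : X ∈ cofinite) :
    ∀ᶠ k in atTop, ∀ f, (⟨k, f⟩ : KunenIndex) ∈ X := by
  rw [← Nat.cofinite_eq_atTop]
  filter_upwards [((mem_cofinite.1 hX).image Sigma.fst).compl_mem_cofinite] with k hk f
  by_contra hf
  exact hk ⟨_, hf, rfl⟩

/-- Kunen's linked matrix with `𝔠` rows and `𝔠` columns on a countable set. -/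
def kunenMatrix : LinkedMatrix (ℕ → Bool) (ℕ → Bool) KunenIndex where
  cell α ξ n := {x | (x.2 (truncate x.1 α)).card ≤ n ∧ truncate x.1 ξ ∈ x.2 (truncate x.1 α)}
  cell_mono _ _ _ _ hmn _ hx := ⟨hx.1.trans hmn, hx.2⟩
  finite_biInter_cell α n σ hσ := by
    classical
    obtain ⟨k₀, hk₀⟩ := eventually_atTop.1 (eventually_injOn_truncate σ)
    refine (KunenIndex.finite_setOf_fst_lt k₀).subset fun x hx => ?_
    by_contra hlt
    obtain ⟨ξ₀, hξ₀⟩ := Finset.card_pos.1 (n.zero_le.trans_lt hσ)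
    have himage : σ.image (truncate x.1) ⊆ x.2 (truncate x.1 α) :=
      Finset.image_subset_iff.2 fun ξ hξ => (mem_iInter₂.1 hx ξ hξ).2
    have hcard := Finset.card_le_card himage
    rw [Finset.card_image_of_injOn (hk₀ _ (not_lt.1 hlt))] at hcard
    exact hσ.not_ge (hcard.trans (mem_iInter₂.1 hx ξ₀ hξ₀).1)

theorem isIndependent_kunenMatrix : kunenMatrix.IsIndependent cofinite ∅ where
  le_cofinite := le_rfl
  inter_box_nonempty {X} hX a _ σ := by
    classical
    obtain ⟨k, hinj, hkX⟩ :=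
      ((eventually_injOn_truncate a).and (KunenIndex.eventually_forall_mk_mem hX)).exists
    let f : (Fin k → Bool) → Finset (Fin k → Bool) := fun β =>
      (σ (Function.invFunOn (truncate k) a β)).image (truncate k)
    have hf (α : ℕ → Bool) (hα : α ∈ a) : f (truncate k α) = (σ α).image (truncate k) := by
      simp only [f, hinj.leftInvOn_invFunOn hα]
    refine ⟨⟨k, f⟩, hkX f, LinkedMatrix.mem_box.2 fun α hα ξ hξ => ⟨?_, ?_⟩⟩
    · exact (congrArg Finset.card (hf α hα)).trans_le Finset.card_image_le
    · exact (hf α hα).ge (Finset.mem_image_of_mem _ hξ)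

/-- The pullback of a linked matrix along a bijection. -/
def LinkedMatrix.comap {ι κ S T : Type*} (M : LinkedMatrix ι κ S) (e : T ≃ S) :
    LinkedMatrix ι κ T where
  cell i x n := e ⁻¹' M.cell i x n
  cell_mono i x _ _ hmn := preimage_mono (M.cell_mono i x hmn)
  finite_biInter_cell i n σ hσ := by
    simpa only [preimage_iInter] using
      (M.finite_biInter_cell i n σ hσ).preimage e.injective.injOn

theorem LinkedMatrix.IsIndependent.comap {ι κ S T : Type*} {M : LinkedMatrix ι κ S} {J : Set ι}
    (h : M.IsIndependent cofinite J) (e : T ≃ S) : (M.comap e).IsIndependent cofinite J where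
  le_cofinite := le_rfl
  inter_box_nonempty {X} hX a ha σ := by
    have hX' : e.symm ⁻¹' X ∈ cofinite := e.symm.injective.tendsto_cofinite hX
    obtain ⟨s, hsX, hs⟩ := h.inter_box_nonempty hX' ha σ
    refine ⟨e.symm s, hsX, mem_box.2 fun i hi x hx => ?_⟩
    simpa [LinkedMatrix.comap] using mem_box.1 hs i hi x hx

theorem exists_linkedMatrix_isIndependent (S : Type*) [Countable S] [Infinite S] :
    ∃ M : LinkedMatrix (ℕ → Bool) (ℕ → Bool) S, M.IsIndependent cofinite ∅ := by
  have : Infinite KunenIndex := Infinite.of_surjective Sigma.fst fun k => ⟨⟨k, fun _ => ∅⟩, rfl⟩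
  obtain ⟨e⟩ := nonempty_equiv_of_countable (α := S) (β := KunenIndex)
  exact ⟨kunenMatrix.comap e, isIndependent_kunenMatrix.comap e⟩

end KunenMatrix

section Existence

/-- Weak P-points: free ultrafilters which, as points of the space of free ultrafilters, are not
in the closure of any countable set of other points. -/
structure IsWeakPPoint {S : Type*} (p : Ultrafilter S) : Prop where
  le_cofinite : (p : Filter S) ≤ cofinite
  exists_mem_forall_notMem {Q : Set (Ultrafilter S)} (hQ : Q.Countable)
    (hne : ∀ q ∈ Q, q ≠ p) (hfree : ∀ q ∈ Q, (q : Filter S) ≤ cofinite) : ∃ C ∈ p, ∀ q ∈ Q, C ∉ q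

theorem finite_setOf_mem_ultrafilter {S κ : Type*} {q : Ultrafilter S}
    (hq : (q : Filter S) ≤ cofinite) {B : Set S} (hB : B ∉ q) {D : κ → Set S} {n : ℕ}
    (hD : ∀ σ : Finset κ, n < σ.card → ((⋂ x ∈ σ, D x) \ B).Finite) : {x | D x ∈ q}.Finite := by
  by_contra hinf
  obtain ⟨σ, hσ, hcard⟩ := Set.Infinite.exists_subset_card_eq hinf (n + 1)
  have hsdiff : ((⋂ x ∈ σ, D x) \ B)ᶜ ∈ q := hq (hD σ (by lia)).compl_mem_cofinite
  refine hB ?_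
  filter_upwards [(biInter_finset_mem σ).2 hσ, hsdiff] with s hs hs'
  exact not_not.1 fun hsB => hs' ⟨hs, hsB⟩

theorem isWeakPPoint_of_forall_isOKAlong {S : Type*} (κ : Type*) [Uncountable κ]
    {p : Ultrafilter S} (hp : (p : Filter S) ≤ cofinite)
    (hOK : ∀ C : ℕ → Set S, Antitone C → IsOKAlong κ p C) : IsWeakPPoint p where
  le_cofinite := hp
  exists_mem_forall_notMem {Q} hQ hne hfree := by
    rcases Q.eq_empty_or_nonempty with rfl | hQne
    · exact ⟨univ, univ_mem, by simp⟩
    obtain ⟨q, rfl⟩ := hQ.exists_eq_range hQne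
    simp only [forall_mem_range] at hne hfree ⊢
    have hB (i : ℕ) : ∃ B ∈ p, B ∉ q i := by
      by_contra! hcon
      exact hne i (Ultrafilter.coe_le_coe.1 hcon)
    choose B hBp hBq using hB
    let C (n : ℕ) : Set S := ⋂ i ∈ Iic n, B i
    have hCp (n : ℕ) : C n ∈ p := (biInter_mem (finite_Iic n)).2 fun i _ => hBp i
    have hCq (n : ℕ) : C n ∉ q n := fun h =>
      hBq n (mem_of_superset h (biInter_subset_of_mem self_mem_Iic))
    have hC : Antitone C := fun m n hmn => biInter_subset_biInter_left (Iic_subset_Iic.2 hmn)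
    rcases hOK C hC with ⟨n, hn⟩ | ⟨D, hD, hDfin⟩
    · exact absurd hn (Ultrafilter.compl_notMem_iff.2 (hCp n))
    have hcount : (⋃ i, {x | D x ∈ q i}).Countable := countable_iUnion fun i =>
      (finite_setOf_mem_ultrafilter (hfree i) (hCq i) (hDfin i)).countable
    obtain ⟨x, hx⟩ : ∃ x, x ∉ ⋃ i, {x | D x ∈ q i} := by
      by_contra! hall
      exact not_countable_univ (hcount.mono fun x _ => hall x)
    exact ⟨D x, hD x, fun i hi => hx (mem_iUnion.2 ⟨i, hi⟩)⟩

theorem exists_isWeakPPoint_forall_ne {S : Type u} [Countable S] [Infinite S] {ρ : Type u}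
    (hρ : #ρ ≤ 𝔠) {r : ρ → Ultrafilter S} (hr : ∀ i, (r i : Filter S) ≤ cofinite) :
    ∃ p : Ultrafilter S, IsWeakPPoint p ∧ ∀ i, p ≠ r i := by
  obtain ⟨M, hM⟩ := exists_linkedMatrix_isIndependent S
  let P : {C : ℕ → Set S // Antitone C} ⊕ ρ → Filter S → Prop :=
    Sum.elim (fun C F => IsOKAlong (ℕ → Bool) F C) (fun i F => ∃ X ∈ F, X ∉ r i)
  have hP : ∀ t, M.IsForceable (P t) := Sum.forall.2
    ⟨fun C => M.isForceable_isOKAlong C.2, fun i => M.isForceable_exists_mem_notMem (hr i)⟩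
  have hseq : #{C : ℕ → Set S // Antitone C} ≤ 𝔠 := by
    refine (mk_subtype_le _).trans ?_
    rw [mk_arrow, mk_set, mk_eq_aleph0 S]
    simp
  have hcard : lift.{0} #({C : ℕ → Set S // Antitone C} ⊕ ρ) ≤ lift.{u} #(ℕ → Bool) := by
    rw [mk_sum]
    simpa using add_le_of_le aleph0_le_continuum hseq hρ
  have : Nonempty {C : ℕ → Set S // Antitone C} := ⟨⟨fun _ => ∅, antitone_const⟩⟩
  have huncountable : ℵ₀ < #(ℕ → Bool) := by simpa using aleph0_lt_continuum
  have : Uncountable (ℕ → Bool) := aleph0_lt_mk_iff.1 huncountable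
  obtain ⟨p, hp, hforced⟩ := hM.exists_ultrafilter_of_forall_isForceable huncountable hcard hP
  refine ⟨p, isWeakPPoint_of_forall_isOKAlong (ℕ → Bool) hp
    fun C hC => hforced (.inl ⟨C, hC⟩), fun i hpr => ?_⟩
  obtain ⟨X, hXp, hXr⟩ := hforced (.inr i)
  exact hXr (hpr ▸ hXp)

theorem continuum_lt_mk_isWeakPPoint (S : Type u) [Countable S] [Infinite S] :
    𝔠 < #{p : Ultrafilter S // IsWeakPPoint p} := by
  by_contra! hle
  obtain ⟨p, hp, hne⟩ := exists_isWeakPPoint_forall_ne hle fun q => q.2.le_cofinite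
  exact hne ⟨p, hp⟩ rfl

end Existence

section RudinKeisler

/-- Rudin–Keisler equivalence: each of the two ultrafilters is an image of the other. -/
def RKEquiv {S T : Type*} (p : Ultrafilter S) (q : Ultrafilter T) : Prop :=
  (∃ f, p.map f = q) ∧ ∃ g, q.map g = p

/-- The Rudin–Keisler equivalence relation on the weak P-points. -/
def rkSetoid (S : Type*) : Setoid {p : Ultrafilter S // IsWeakPPoint p} where
  r p q := RKEquiv p.1 q.1
  iseqv.refl p := ⟨⟨id, p.1.map_id⟩, ⟨id, p.1.map_id⟩⟩
  iseqv.symm h := ⟨h.2, h.1⟩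
  iseqv.trans := by
    rintro p q r ⟨⟨f, hf⟩, ⟨g, hg⟩⟩ ⟨⟨f', hf'⟩, ⟨g', hg'⟩⟩
    exact ⟨⟨f' ∘ f, by rw [← hf', ← hf, Ultrafilter.map_map]⟩,
      ⟨g ∘ g', by rw [← hg, ← hg', Ultrafilter.map_map]⟩⟩

theorem continuum_lt_mk_quotient_rkSetoid (S : Type u) [Countable S] [Infinite S] :
    𝔠 < #(Quotient (rkSetoid S)) := by
  have hfiber (c : Quotient (rkSetoid S)) : #(Quotient.mk (rkSetoid S) ⁻¹' {c}) ≤ 𝔠 := by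
    have hmap (p : Quotient.mk (rkSetoid S) ⁻¹' {c}) : ∃ f, c.out.1.map f = p.1.1 :=
      ((rkSetoid S).symm (Quotient.mk_eq_iff_out.1 p.2)).1
    choose f hf using hmap
    have hinj : Function.Injective f := fun p q hpq =>
      Subtype.ext (Subtype.ext ((hf p).symm.trans (hpq ▸ hf q)))
    simpa using mk_le_of_injective hinj
  by_contra! hle
  exact (continuum_lt_mk_isWeakPPoint S).not_ge
    ((mk_le_mk_mul_of_mk_preimage_le _ hfiber).trans (mul_le_of_le aleph0_le_continuum hle le_rfl))

theorem exists_family_isWeakPPoint (S : Type u) [Countable S] [Infinite S] :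
    ∃ (I : Type u) (P : I → List S → Ultrafilter S), 𝔠 < #I ∧ (∀ i s, IsWeakPPoint (P i s)) ∧
      ∀ i j s t, RKEquiv (P i s) (P j t) → i = j ∧ s = t := by
  have hlt := continuum_lt_mk_quotient_rkSetoid S
  have hle : #(Quotient (rkSetoid S) × List S) ≤ #(Quotient (rkSetoid S)) := by
    simpa using (mul_aleph0_eq (aleph0_le_continuum.trans hlt.le)).le
  obtain ⟨φ⟩ := (le_def _ _).1 hle
  refine ⟨_, fun i s => (φ (i, s)).out.1, hlt, fun i s => (φ (i, s)).out.2, fun i j s t h => ?_⟩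
  exact Prod.mk.inj (φ.injective (Quotient.out_equiv_out.1 h))

end RudinKeisler

end WeakPPoints

section ExtremallyDisconnectedSpaces

open Set Topology

variable {T : Type*} [TopologicalSpace T]

theorem exists_isClopen_preimage_stoneCechUnit {K : Set T} (hK : IsClopen K) :
    ∃ W : Set (StoneCech T), IsClopen W ∧ stoneCechUnit ⁻¹' W = K := by
  have hind : Continuous K.boolIndicator := (continuous_boolIndicator_iff_isClopen K).2 hK
  refine ⟨stoneCechExtend hind ⁻¹' {true},
    (isClopen_discrete _).preimage (continuous_stoneCechExtend hind), ?_⟩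
  rw [← preimage_comp, stoneCechExtend_extends, preimage_boolIndicator_true]

theorem closure_image_stoneCechUnit_of_isClopen {K : Set T} (hK : IsClopen K) :
    IsClopen (closure (stoneCechUnit '' K)) ∧
      stoneCechUnit ⁻¹' closure (stoneCechUnit '' K) = K := by
  obtain ⟨W, hW, rfl⟩ := exists_isClopen_preimage_stoneCechUnit hK
  have hcl : closure (stoneCechUnit '' (stoneCechUnit ⁻¹' W)) = W :=
    (closure_minimal (image_preimage_subset _ _) hW.isClosed).antisymm
      (denseRange_stoneCechUnit.subset_closure_image_preimage_of_isOpen hW.isOpen)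
  simpa only [hcl, and_true] using hW

theorem isOpen_closure_image_stoneCechUnit [ExtremallyDisconnected T] {U : Set T}
    (hU : IsOpen U) : IsOpen (closure (stoneCechUnit '' U)) := by
  rw [← closure_image_closure continuous_stoneCechUnit]
  exact (closure_image_stoneCechUnit_of_isClopen
    ⟨isClosed_closure, ExtremallyDisconnected.open_closure U hU⟩).1.isOpen

theorem extremallyDisconnected_stoneCech [ExtremallyDisconnected T] :
    ExtremallyDisconnected (StoneCech T) where
  open_closure O hO := by
    have hcl : closure O = closure (stoneCechUnit '' (stoneCechUnit ⁻¹' O)) :=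
      (closure_minimal (denseRange_stoneCechUnit.subset_closure_image_preimage_of_isOpen hO)
        isClosed_closure).antisymm (closure_mono (image_preimage_subset _ _))
    rw [hcl]
    exact isOpen_closure_image_stoneCechUnit (hO.preimage continuous_stoneCechUnit)

theorem exists_isOpen_mem_disjoint_closure [RegularSpace T] {E : Set T} {x : T}
    (hx : x ∉ closure E) : ∃ V, IsOpen V ∧ x ∈ V ∧ Disjoint (closure V) E := by
  obtain ⟨V, hV, hVclosed, hVE⟩ :=
    exists_mem_nhds_isClosed_subset (isClosed_closure.isOpen_compl.mem_nhds hx)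
  refine ⟨interior V, isOpen_interior, mem_interior_iff_mem_nhds.2 hV, ?_⟩
  exact (disjoint_compl_left.mono_left hVE).mono
    (closure_minimal interior_subset hVclosed) subset_closure

theorem hasSeparatingCover_of_countable [RegularSpace T] {D E : Set T} (hD : D.Countable)
    (h : Disjoint D (closure E)) : HasSeparatingCover D E := by
  rcases D.eq_empty_or_nonempty with rfl | hne
  · exact hasSeparatingCover_empty_left E
  obtain ⟨d, rfl⟩ := hD.exists_eq_range hne
  choose u hu hdu hdisj using fun n =>
    exists_isOpen_mem_disjoint_closure (disjoint_left.1 h (mem_range_self n))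
  exact ⟨u, range_subset_iff.2 fun n => mem_iUnion.2 ⟨n, hdu n⟩, fun n => ⟨hu n, hdisj n⟩⟩

theorem disjoint_closure_of_countable [RegularSpace T] [ExtremallyDisconnected T] {D E : Set T}
    (hD : D.Countable) (hE : E.Countable) (hDE : Disjoint D (closure E))
    (hED : Disjoint E (closure D)) : Disjoint (closure D) (closure E) := by
  obtain ⟨U, V, hU, hV, hDU, hEV, hUV⟩ := hasSeparatingCovers_iff_separatedNhds.1
    ⟨hasSeparatingCover_of_countable hD hDE, hasSeparatingCover_of_countable hE hED⟩
  exact (ExtremallyDisconnected.disjoint_closure_of_disjoint_isOpen hUV hU hV).mono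
    (closure_mono hDU) (closure_mono hEV)

end ExtremallyDisconnectedSpaces

/-- The tree of finite sequences in `S` with the topology in which `s` is the limit of its
children `n :: s` along `p s`. Sequences grow at the head, so that the initial segments of a
sequence are its suffixes as a list. -/
structure UltrafilterTree {S : Type*} (p : List S → Ultrafilter S) where
  node : List S

namespace UltrafilterTree

open Filter Set Topology

variable {S : Type*} {p : List S → Ultrafilter S}

instance : TopologicalSpace (UltrafilterTree p) where
  IsOpen U := ∀ s : List S, ⟨s⟩ ∈ U → ∀ᶠ n in (p s : Filter S), ⟨n :: s⟩ ∈ U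
  isOpen_univ _ _ := by simp
  isOpen_inter _ _ hU hV s hs := (hU s hs.1).and (hV s hs.2)
  isOpen_sUnion _ h s := fun ⟨U, hU, hsU⟩ => (h U hU s hsU).mono fun _ hn => ⟨U, hU, hn⟩

theorem isOpen_iff {U : Set (UltrafilterTree p)} :
    IsOpen U ↔ ∀ s, ⟨s⟩ ∈ U → ∀ᶠ n in p s, ⟨n :: s⟩ ∈ U :=
  Iff.rfl

instance [Countable S] : Countable (UltrafilterTree p) :=
  Function.Injective.countable (f := node) fun _ _ h => congrArg mk h

theorem tendsto_mk_cons (s : List S) :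
    Tendsto (fun n => (⟨n :: s⟩ : UltrafilterTree p)) (p s) (𝓝 ⟨s⟩) :=
  tendsto_nhds.2 fun _ hU hs => isOpen_iff.1 hU s hs

theorem continuous_iff_forall_tendsto {Z : Type*} [TopologicalSpace Z]
    {f : UltrafilterTree p → Z} :
    Continuous f ↔ ∀ s, Tendsto (fun n => f ⟨n :: s⟩) (p s) (𝓝 (f ⟨s⟩)) :=
  ⟨fun hf s => (hf.tendsto _).comp (tendsto_mk_cons s),
    fun h => ⟨fun _ hO => isOpen_iff.2 fun s hs => h s (hO.mem_nhds hs)⟩⟩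

instance : ExtremallyDisconnected (UltrafilterTree p) where
  open_closure U hU := isOpen_iff.2 fun s hs => by
    by_contra hcon
    have hout : ∀ᶠ n in p s, ⟨n :: s⟩ ∉ closure U := Ultrafilter.eventually_not.2 hcon
    have hsU : ⟨s⟩ ∉ U := fun hsU =>
      hcon ((isOpen_iff.1 hU s hsU).mono fun _ hn => subset_closure hn)
    have hopen : IsOpen (insert ⟨s⟩ (closure U)ᶜ) := isOpen_iff.2 fun t ht => by
      obtain rfl | ht := (mem_insert_iff.1 ht).imp_left (congrArg node)
      · exact hout.mono fun _ hn => .inr hn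
      · exact (isOpen_iff.1 isClosed_closure.isOpen_compl t ht).mono fun _ hn => .inr hn
    obtain ⟨x, rfl | hx, hxU⟩ := mem_closure_iff.1 hs _ hopen (mem_insert _ _)
    · exact hsU hxU
    · exact hx (subset_closure hxU)

theorem isClopen_setOf_suffix (hp : ∀ s, (p s : Filter S) ≤ cofinite) (t : List S) :
    IsClopen {u : UltrafilterTree p | t <:+ u.node} := by
  refine ⟨isOpen_compl_iff.1 (isOpen_iff.2 fun s hs => ?_), isOpen_iff.2 fun s hs => ?_⟩
  · have hfin : {n | t = n :: s}.Finite := Set.Subsingleton.finite fun m hm n hn =>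
      (List.cons.inj (hm.symm.trans hn)).1
    filter_upwards [hp s hfin.compl_mem_cofinite] with n hn hsuffix
    exact (List.suffix_cons_iff.1 hsuffix).elim hn hs
  · exact .of_forall fun n => List.IsSuffix.trans hs (List.suffix_cons n s)

theorem eq_of_cons_suffix {m n : S} {t u : List S} (hm : m :: t <:+ u) (hn : n :: t <:+ u) :
    m = n :=
  (List.cons.inj ((List.suffix_of_suffix_length_le hm hn (by simp)).eq_of_length (by simp))).1

theorem eq_or_exists_cons_suffix {t u : List S} (h : t <:+ u) : t = u ∨ ∃ m, m :: t <:+ u := by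
  obtain ⟨l, rfl⟩ := h
  rcases l.eq_nil_or_concat with rfl | ⟨l, m, rfl⟩
  · exact .inl rfl
  · exact .inr ⟨m, l, by simp⟩

open scoped Classical in
/-- The direction in which a node of the tree lies above `t`, as a principal ultrafilter; nodes that
do not lie above `t` are sent to the limit `p t` of the directions at `t`. -/
noncomputable def branch (t : List S) (u : UltrafilterTree p) : Ultrafilter S :=
  if h : ∃ m, m :: t <:+ u.node then pure h.choose else p t

theorem branch_of_suffix {m : S} {t : List S} {u : UltrafilterTree p} (h : m :: t <:+ u.node) :
    branch t u = pure m := by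
  have hex : ∃ m, m :: t <:+ u.node := ⟨m, h⟩
  rw [branch, dif_pos hex, eq_of_cons_suffix hex.choose_spec h]

theorem branch_of_not_suffix {t : List S} {u : UltrafilterTree p}
    (h : ¬∃ m, m :: t <:+ u.node) : branch t u = p t :=
  dif_neg h

theorem branch_self (t : List S) : branch t (⟨t⟩ : UltrafilterTree p) = p t :=
  branch_of_not_suffix fun ⟨_, hm⟩ => by simpa using hm.length_le

theorem continuous_branch (t : List S) : Continuous (branch t : UltrafilterTree p → _) := by
  refine continuous_iff_forall_tendsto.2 fun s => ?_
  by_cases h : ∃ m, m :: t <:+ s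
  · obtain ⟨m, hm⟩ := h
    rw [branch_of_suffix (u := ⟨s⟩) hm]
    refine tendsto_const_nhds.congr fun n => (branch_of_suffix ?_).symm
    exact hm.trans (List.suffix_cons n s)
  rcases eq_or_ne s t with rfl | hst
  · rw [branch_self]
    exact (p s).tendsto_pure_self.congr fun n => (branch_of_suffix List.suffix_rfl).symm
  · rw [branch_of_not_suffix (u := ⟨s⟩) h]
    refine tendsto_const_nhds.congr fun n => (branch_of_not_suffix fun ⟨m, hm⟩ => ?_).symm
    rcases List.suffix_cons_iff.1 hm with heq | hsuffix
    · exact hst (List.cons.inj heq).2.symm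
    · exact h ⟨m, hsuffix⟩

end UltrafilterTree

/-- The Stone–Čech compactification of the tree of finite sequences with limits along `p`. -/
abbrev TreeSpace {S : Type*} (p : List S → Ultrafilter S) : Type _ :=
  StoneCech (UltrafilterTree p)

namespace TreeSpace

open Filter Set Topology

variable {S : Type*} {p : List S → Ultrafilter S}

instance : ExtremallyDisconnected (TreeSpace p) :=
  extremallyDisconnected_stoneCech

/-- The points of `TreeSpace p` that come from the tree. -/
def pt (p : List S → Ultrafilter S) (s : List S) : TreeSpace p :=
  stoneCechUnit ⟨s⟩

theorem denseRange_pt : DenseRange (pt p) :=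
  denseRange_stoneCechUnit.comp (Function.Surjective.denseRange fun u => ⟨u.node, rfl⟩)
    continuous_stoneCechUnit

instance [Countable S] : SeparableSpace (TreeSpace p) :=
  ⟨range (pt p), countable_range _, denseRange_pt⟩

theorem tendsto_pt_cons (s : List S) : Tendsto (fun n => pt p (n :: s)) (p s) (𝓝 (pt p s)) :=
  (continuous_stoneCechUnit.tendsto _).comp (UltrafilterTree.tendsto_mk_cons s)

theorem pt_mem_closure_image_pt_cons {t : List S} {M : Set S} (hM : M ∈ p t) :
    pt p t ∈ closure ((fun m => pt p (m :: t)) '' M) :=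
  mem_closure_of_tendsto (tendsto_pt_cons t) (mem_of_superset hM fun _ hm => mem_image_of_mem _ hm)

/-- The closure in `TreeSpace p` of the set of nodes that extend `t`. -/
def cone (p : List S → Ultrafilter S) (t : List S) : Set (TreeSpace p) :=
  closure (stoneCechUnit '' {u : UltrafilterTree p | t <:+ u.node})

theorem cone_anti {s t : List S} (hst : s <:+ t) : cone p t ⊆ cone p s :=
  closure_mono (image_mono fun _ h => hst.trans h)

theorem isOpen_cone (hp : ∀ s, (p s : Filter S) ≤ cofinite) (t : List S) :
    IsOpen (cone p t) :=
  (closure_image_stoneCechUnit_of_isClopen (UltrafilterTree.isClopen_setOf_suffix hp t)).1.isOpen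

theorem pt_mem_cone_iff (hp : ∀ s, (p s : Filter S) ≤ cofinite) {s t : List S} :
    pt p s ∈ cone p t ↔ t <:+ s :=
  Set.ext_iff.1 (closure_image_stoneCechUnit_of_isClopen
    (UltrafilterTree.isClopen_setOf_suffix hp t)).2 ⟨s⟩

theorem pt_injective (hp : ∀ s, (p s : Filter S) ≤ cofinite) :
    Function.Injective (pt p) := fun s t h => by
  have hst : s <:+ t := (pt_mem_cone_iff hp).1 (h ▸ (pt_mem_cone_iff hp).2 List.suffix_rfl)
  have hts : t <:+ s := (pt_mem_cone_iff hp).1 (h ▸ (pt_mem_cone_iff hp).2 List.suffix_rfl)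
  exact hst.eq_of_length (hst.length_le.antisymm hts.length_le)

theorem infinite [Infinite S] (hp : ∀ s, (p s : Filter S) ≤ cofinite) :
    Infinite (TreeSpace p) :=
  Infinite.of_injective _ (pt_injective hp)

theorem pt_cons_ne (hp : ∀ s, (p s : Filter S) ≤ cofinite) (m : S) (t : List S) :
    pt p (m :: t) ≠ pt p t :=
  (pt_injective hp).ne (List.cons_ne_self m t)

theorem suffix_of_mem_cone (hp : ∀ s, (p s : Filter S) ≤ cofinite) {s t : List S}
    {x : TreeSpace p} (hs : x ∈ cone p s) (ht : x ∈ cone p t) : s <:+ t ∨ t <:+ s := by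
  obtain ⟨_, ⟨hs, ht⟩, u, rfl⟩ := denseRange_pt.inter_open_nonempty _
    ((isOpen_cone hp s).inter (isOpen_cone hp t)) ⟨x, hs, ht⟩
  exact List.suffix_or_suffix_of_suffix ((pt_mem_cone_iff hp).1 hs) ((pt_mem_cone_iff hp).1 ht)

theorem eq_of_mem_cone_cons (hp : ∀ s, (p s : Filter S) ≤ cofinite) {m n : S}
    {t : List S} {x : TreeSpace p} (hm : x ∈ cone p (m :: t)) (hn : x ∈ cone p (n :: t)) :
    m = n := by
  have heq : m :: t = n :: t := (suffix_of_mem_cone hp hm hn).elim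
    (fun h => h.eq_of_length (by simp)) (fun h => (h.eq_of_length (by simp)).symm)
  exact (List.cons.inj heq).1

/-- The continuous extension of `UltrafilterTree.branch` to `TreeSpace p`. -/
noncomputable def branchProj (p : List S → Ultrafilter S) (t : List S) :
    TreeSpace p → Ultrafilter S :=
  stoneCechExtend (UltrafilterTree.continuous_branch t)

theorem continuous_branchProj (t : List S) : Continuous (branchProj p t) :=
  continuous_stoneCechExtend _

theorem branchProj_pt (t : List S) : branchProj p t (pt p t) = p t :=
  (stoneCechExtend_stoneCechUnit _ _).trans (UltrafilterTree.branch_self t)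

theorem branchProj_pt_cons (m : S) (t : List S) : branchProj p t (pt p (m :: t)) = pure m :=
  (stoneCechExtend_stoneCechUnit _ _).trans (UltrafilterTree.branch_of_suffix List.suffix_rfl)

theorem pt_cons_mem_closure_image_iff {m : S} {t : List S} {N : Set S} :
    pt p (m :: t) ∈ closure ((fun n => pt p (n :: t)) '' N) ↔ m ∈ N := by
  refine ⟨fun h => ?_, fun h => subset_closure ⟨m, h, rfl⟩⟩
  have hopen : IsOpen (branchProj p t ⁻¹' {q | {m} ∈ q}) :=
    (ultrafilter_isOpen_basic {m}).preimage (continuous_branchProj t)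
  obtain ⟨_, hmn, n, hn, rfl⟩ := mem_closure_iff.1 h _ hopen
    (by simp [branchProj_pt_cons])
  have heq : n = m := by simpa [branchProj_pt_cons] using hmn
  exact heq ▸ hn

theorem tendsto_pt_cons_branchProj {t : List S} {x : TreeSpace p}
    (hx : x ∈ closure (range fun m => pt p (m :: t))) :
    Tendsto (fun m => pt p (m :: t)) (branchProj p t x) (𝓝 x) := by
  obtain ⟨q, hq⟩ : ∃ q : Ultrafilter S, Tendsto (fun m => pt p (m :: t)) q (𝓝 x) := by
    have : (comap (fun m => pt p (m :: t)) (𝓝 x)).NeBot := comap_neBot fun V hV => by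
      obtain ⟨_, hy, m, rfl⟩ := mem_closure_iff_nhds.1 hx V hV
      exact ⟨m, hy⟩
    exact ⟨.of _, tendsto_iff_comap.2 (Ultrafilter.of_le _)⟩
  have hpure : Tendsto (pure : S → Ultrafilter S) q (𝓝 (branchProj p t x)) :=
    (((continuous_branchProj t).tendsto x).comp hq).congr fun m => branchProj_pt_cons m t
  rwa [tendsto_nhds_unique hpure q.tendsto_pure_self]

theorem pt_notMem_closure_of_subset_closure_range {t : List S} (ht : IsWeakPPoint (p t))
    {D : Set (TreeSpace p)} (hD : D.Countable)
    (hsub : D ⊆ closure (range fun m => pt p (m :: t))) (htD : pt p t ∉ D)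
    (hchild : ∀ m, pt p (m :: t) ∉ D) : pt p t ∉ closure D := by
  have hne (x : TreeSpace p) (hx : x ∈ D) : branchProj p t x ≠ p t := fun heq => by
    have hlim : Tendsto (fun m => pt p (m :: t)) (p t) (𝓝 x) :=
      heq ▸ tendsto_pt_cons_branchProj (hsub hx)
    exact htD (tendsto_nhds_unique hlim (tendsto_pt_cons t) ▸ hx)
  have hfree (x : TreeSpace p) (hx : x ∈ D) : (branchProj p t x : Filter S) ≤ cofinite := by
    refine (Ultrafilter.le_cofinite_or_eq_pure _).resolve_right fun ⟨m, hm⟩ => ?_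
    have hlim := tendsto_pt_cons_branchProj (hsub hx)
    rw [hm, Ultrafilter.coe_pure] at hlim
    exact hchild m (tendsto_nhds_unique hlim (tendsto_pure_nhds _ _) ▸ hx)
  obtain ⟨C, hCt, hCD⟩ := ht.exists_mem_forall_notMem (hD.image (branchProj p t))
    (forall_mem_image.2 hne) (forall_mem_image.2 hfree)
  intro hcl
  obtain ⟨x, hCx, hxD⟩ := mem_closure_iff.1 hcl (branchProj p t ⁻¹' {q | C ∈ q})
    ((ultrafilter_isOpen_basic C).preimage (continuous_branchProj t))
    (mem_preimage.2 ((branchProj_pt t).symm ▸ hCt))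
  exact hCD _ (mem_image_of_mem _ hxD) hCx

-- `D` is split by the closure of the children of `t` outside `closure D`: the part inside that
-- closure consists of limits of children along ultrafilters, the rest is separated from it by
-- extremal disconnectedness.
theorem pt_notMem_closure_of_eventually [Countable S] {t : List S} (ht : IsWeakPPoint (p t))
    {D : Set (TreeSpace p)} (hD : D.Countable) (htD : pt p t ∉ D)
    (hchild : ∀ᶠ m in p t, pt p (m :: t) ∉ closure D) : pt p t ∉ closure D := by
  set Y := (fun m => pt p (m :: t)) '' {m | pt p (m :: t) ∉ closure D}
  have hnear : pt p t ∉ closure (D ∩ closure Y) := by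
    refine pt_notMem_closure_of_subset_closure_range ht (hD.mono inter_subset_left)
      (inter_subset_right.trans (closure_mono (image_subset_range _ _))) (fun h => htD h.1) ?_
    rintro m ⟨hmD, hmY⟩
    exact pt_cons_mem_closure_image_iff.1 hmY (subset_closure hmD)
  have hfar : Disjoint (closure (D \ closure Y)) (closure Y) := by
    refine disjoint_closure_of_countable (hD.mono sdiff_subset) ((to_countable _).image _)
      disjoint_sdiff_left (disjoint_left.2 ?_)
    rintro _ ⟨m, hm, rfl⟩ hmD
    exact hm (closure_mono sdiff_subset hmD)
  rw [← inter_union_sdiff D (closure Y), closure_union]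
  rintro (h | h)
  · exact hnear h
  · exact disjoint_left.1 hfar h (pt_mem_closure_image_pt_cons hchild)

theorem closure_image_stoneCechUnit_mem_nhds_pt {U : Set (UltrafilterTree p)} (hU : IsOpen U)
    {t : List S} (ht : ⟨t⟩ ∈ U) : closure (stoneCechUnit '' U) ∈ 𝓝 (pt p t) :=
  (isOpen_closure_image_stoneCechUnit hU).mem_nhds (subset_closure (mem_image_of_mem _ ht))

section CountableSetsWithoutNodes

/-- The nodes above `t₀` that lie in the prescribed neighbourhoods of all nodes between `t₀`
and themselves. -/
def nodesWithin (V : List S → Set (TreeSpace p)) (t₀ : List S) : Set (UltrafilterTree p) :=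
  {u | t₀ <:+ u.node ∧ ∀ t, t₀ <:+ t → t <:+ u.node → pt p u.node ∈ V t}

theorem isOpen_nodesWithin {V : List S → Set (TreeSpace p)} (hV : ∀ t, IsOpen (V t))
    (hmem : ∀ t, pt p t ∈ V t) (t₀ : List S) : IsOpen (nodesWithin V t₀) := by
  refine UltrafilterTree.isOpen_iff.2 fun s ⟨hs, hsV⟩ => ?_
  have hfin : {t | t <:+ s}.Finite := s.tails.finite_toSet.subset fun t => (List.mem_tails t s).2
  have hev : ∀ᶠ n in p s, ∀ t ∈ {t | t <:+ s}, t₀ <:+ t → pt p (n :: s) ∈ V t :=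
    (eventually_all_finite hfin).2 fun t ht => eventually_imp_distrib_left.2 fun ht₀ =>
      tendsto_pt_cons s ((hV t).mem_nhds (hsV t ht₀ ht))
  filter_upwards [hev] with n hn
  refine ⟨hs.trans (List.suffix_cons n s), fun t ht₀ ht => ?_⟩
  rcases List.suffix_cons_iff.1 ht with rfl | ht
  · exact hmem _
  · exact hn t ht ht₀

theorem pt_notMem_closure_of_forall_notMem_cone_cons [Countable S] (hp : ∀ s, IsWeakPPoint (p s))
    {D : Set (TreeSpace p)} (hD : D.Countable) {t : List S} (htD : pt p t ∉ D)
    (hcone : ∀ x ∈ D, ∀ m, x ∉ cone p (m :: t)) : pt p t ∉ closure D := by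
  have hfree (s : List S) := (hp s).le_cofinite
  refine pt_notMem_closure_of_eventually (hp t) hD htD (.of_forall fun m hm => ?_)
  obtain ⟨x, hxm, hxD⟩ := mem_closure_iff.1 hm _ (isOpen_cone hfree (m :: t))
    ((pt_mem_cone_iff hfree).2 List.suffix_rfl)
  exact hcone x hxD m hxm

theorem pt_notMem_closure_of_exists_last_cone [Countable S] (hp : ∀ s, IsWeakPPoint (p s))
    {D : Set (TreeSpace p)} (hD : D.Countable) (hnode : ∀ s, pt p s ∉ D)
    (hlast : ∀ x ∈ D, ∃ t, x ∈ cone p t ∧ ∀ m, x ∉ cone p (m :: t)) (t₀ : List S) :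
    pt p t₀ ∉ closure D := by
  have hfree (s : List S) := (hp s).le_cofinite
  let Dlast (t : List S) : Set (TreeSpace p) := {x ∈ D | x ∈ cone p t ∧ ∀ m, x ∉ cone p (m :: t)}
  have hDlast (t : List S) : pt p t ∉ closure (Dlast t) :=
    pt_notMem_closure_of_forall_notMem_cone_cons hp (hD.mono (sep_subset _ _))
      (fun h => hnode t h.1) fun x hx => hx.2.2
  choose V hVopen hmem hVD using fun t => exists_isOpen_mem_disjoint_closure (hDlast t)
  have hnhds := closure_image_stoneCechUnit_mem_nhds_pt (isOpen_nodesWithin hVopen hmem t₀)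
    ⟨List.suffix_rfl, fun t ht ht' => (ht'.eq_of_length_le ht.length_le) ▸ hmem _⟩
  intro hcl
  obtain ⟨x, hxU, hxD⟩ := mem_closure_iff_nhds.1 hcl _ hnhds
  obtain ⟨t, hxt, hxlast⟩ := hlast x hxD
  have hxt₀ : x ∈ cone p t₀ := closure_mono (image_mono fun _ hu => hu.1) hxU
  have ht : t₀ <:+ t := by
    rcases suffix_of_mem_cone hfree hxt₀ hxt with ht | ht
    · exact ht
    rcases UltrafilterTree.eq_or_exists_cons_suffix ht with rfl | ⟨m, hm⟩
    · exact List.suffix_rfl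
    · exact absurd (cone_anti hm hxt₀) (hxlast m)
  have hxV : x ∈ closure (V t) := mem_closure_iff.2 fun O hO hxO => by
    obtain ⟨_, ⟨hyO, hyt⟩, u, hu, rfl⟩ := mem_closure_iff.1 hxU _
      (hO.inter (isOpen_cone hfree t)) ⟨hxO, hxt⟩
    exact ⟨_, hyO, hu.2 t ht ((pt_mem_cone_iff hfree).1 hyt)⟩
  exact disjoint_left.1 (hVD t) hxV ⟨hxD, hxt, hxlast⟩

/-- The nodes above `t₀` none of whose steps `v ↦ n :: v` above `t₀` leads into a cone containing a
point of `D` of index at most `v.length`. -/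
def nodesAvoiding (D : Set (TreeSpace p)) (idx : TreeSpace p → ℕ) (t₀ : List S) :
    Set (UltrafilterTree p) :=
  {u | t₀ <:+ u.node ∧ ∀ n v, t₀ <:+ v → n :: v <:+ u.node →
    ∀ x ∈ D, idx x ≤ v.length → x ∉ cone p (n :: v)}

theorem isOpen_nodesAvoiding (hp : ∀ s, (p s : Filter S) ≤ cofinite) {D : Set (TreeSpace p)}
    {idx : TreeSpace p → ℕ} (hidx : InjOn idx D) (t₀ : List S) :
    IsOpen (nodesAvoiding D idx t₀) := by
  refine UltrafilterTree.isOpen_iff.2 fun s ⟨hs, hsD⟩ => ?_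
  have hfin : {x ∈ D | idx x ≤ s.length}.Finite :=
    Finite.of_finite_image ((finite_Iic s.length).subset (image_subset_iff.2 fun x hx => hx.2))
      (hidx.mono (sep_subset _ _))
  have hev : ∀ᶠ n in p s, ∀ x ∈ {x ∈ D | idx x ≤ s.length}, x ∉ cone p (n :: s) := by
    refine (eventually_all_finite hfin).2 fun x _ => hp s (Finite.compl_mem_cofinite ?_)
    exact Set.Subsingleton.finite fun m hm n hn => eq_of_mem_cone_cons hp hm hn
  filter_upwards [hev] with n hn
  refine ⟨hs.trans (List.suffix_cons n s), fun m v hv hmv x hxD hx => ?_⟩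
  rcases List.suffix_cons_iff.1 hmv with heq | hmv
  · obtain ⟨rfl, rfl⟩ := List.cons.inj heq
    exact hn x ⟨hxD, hx⟩
  · exact hsD m v hv hmv x hxD hx

theorem exists_mem_cone_le_length {x : TreeSpace p}
    (hx : ∀ t, x ∈ cone p t → ∃ m, x ∈ cone p (m :: t)) {t₀ : List S} (ht₀ : x ∈ cone p t₀)
    (k : ℕ) : ∃ t, t₀ <:+ t ∧ x ∈ cone p t ∧ k ≤ t.length := by
  induction k with
  | zero => exact ⟨t₀, List.suffix_rfl, ht₀, Nat.zero_le _⟩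
  | succ k ih =>
    obtain ⟨t, ht, hxt, hk⟩ := ih
    obtain ⟨m, hm⟩ := hx t hxt
    exact ⟨m :: t, ht.trans (List.suffix_cons m t), hm, by simpa using hk⟩

theorem pt_notMem_closure_of_forall_exists_mem_cone_cons (hp : ∀ s, (p s : Filter S) ≤ cofinite)
    {D : Set (TreeSpace p)} (hD : D.Countable)
    (hend : ∀ x ∈ D, ∀ t, x ∈ cone p t → ∃ m, x ∈ cone p (m :: t)) (t₀ : List S) :
    pt p t₀ ∉ closure D := by
  obtain ⟨idx, hidx⟩ := countable_iff_exists_injOn.1 hD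
  have hnhds : closure (stoneCechUnit '' nodesAvoiding D idx t₀) ∈ 𝓝 (pt p t₀) := by
    refine closure_image_stoneCechUnit_mem_nhds_pt (isOpen_nodesAvoiding hp hidx t₀)
      ⟨List.suffix_rfl, fun n v hv hnv => ?_⟩
    exact absurd (hnv.length_le.trans hv.length_le) (by simp)
  intro hcl
  obtain ⟨x, hxU, hxD⟩ := mem_closure_iff_nhds.1 hcl _ hnhds
  have hxt₀ : x ∈ cone p t₀ := closure_mono (image_mono fun _ hu => hu.1) hxU
  obtain ⟨v, hv, hxv, hlen⟩ := exists_mem_cone_le_length (hend x hxD) hxt₀ (idx x)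
  obtain ⟨n, hn⟩ := hend x hxD v hxv
  obtain ⟨_, hcone, u, hu, rfl⟩ := mem_closure_iff.1 hxU _ (isOpen_cone hp (n :: v)) hn
  exact hu.2 n v hv ((pt_mem_cone_iff hp).1 hcone) x hxD hlen hn

theorem pt_notMem_closure_of_forall_pt_notMem [Countable S] (hp : ∀ s, IsWeakPPoint (p s))
    {D : Set (TreeSpace p)} (hD : D.Countable) (hnode : ∀ s, pt p s ∉ D) (t₀ : List S) :
    pt p t₀ ∉ closure D := by
  let E : Set (TreeSpace p) := {x | ∃ t, x ∈ cone p t ∧ ∀ m, x ∉ cone p (m :: t)}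
  rw [← inter_union_sdiff D E, closure_union]
  rintro (h | h)
  · exact pt_notMem_closure_of_exists_last_cone hp (hD.mono inter_subset_left)
      (fun s hs => hnode s hs.1) (fun x hx => hx.2) t₀ h
  · refine pt_notMem_closure_of_forall_exists_mem_cone_cons (fun s => (hp s).le_cofinite)
      (hD.mono sdiff_subset) (fun x hx t hxt => ?_) t₀ h
    by_contra! hcon
    exact hx.2 ⟨t, hxt, hcon⟩

end CountableSetsWithoutNodes

section Homeomorphisms

variable {T : Type*} [Countable S] [Countable T] {p' : List T → Ultrafilter T}

theorem exists_homeomorph_pt_eq_pt (hp' : ∀ t, IsWeakPPoint (p' t))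
    (h : TreeSpace p ≃ₜ TreeSpace p') {A : Set (TreeSpace p)} (hA : IsOpen A) (hne : A.Nonempty) :
    ∃ s t, pt p s ∈ A ∧ h (pt p s) = pt p' t := by
  by_contra! hcon
  have hD : (h '' (A ∩ range (pt p))).Countable :=
    ((countable_range _).mono inter_subset_right).image h
  obtain ⟨_, ⟨x, hx, rfl⟩, t, ht⟩ := denseRange_pt.inter_open_nonempty (h '' A)
    (h.isOpenMap A hA) (hne.image h)
  have hnode : ∀ t, pt p' t ∉ h '' (A ∩ range (pt p)) := by
    rintro t ⟨_, ⟨hsA, s, rfl⟩, hst⟩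
    exact hcon s t hsA hst
  refine pt_notMem_closure_of_forall_pt_notMem hp' hD hnode t ?_
  rw [ht, ← h.image_closure]
  exact mem_image_of_mem h (denseRange_pt.open_subset_closure_inter hA hx)

-- If `h` moved almost all children of `s` off the children of `t`, then the preimages of the
-- children of `t` would be countably many limits of children of `s`, different from these
-- children, that accumulate at `s`.
theorem eventually_homeomorph_pt_cons_mem_range (hp : ∀ s, IsWeakPPoint (p s))
    (hp' : ∀ t, IsWeakPPoint (p' t)) (h : TreeSpace p ≃ₜ TreeSpace p') {s : List S} {t : List T}
    (hst : h (pt p s) = pt p' t) :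
    ∀ᶠ n in p s, h (pt p (n :: s)) ∈ range fun m => pt p' (m :: t) := by
  by_contra hcon
  let N : Set S := {n | h (pt p (n :: s)) ∉ range fun m => pt p' (m :: t)}
  have hN : N ∈ p s := Ultrafilter.eventually_not.2 hcon
  let Y : Set (TreeSpace p) := (fun n => pt p (n :: s)) '' N
  let B : Set T := {m | pt p' (m :: t) ∈ closure (h '' Y)}
  have hY : Y.Countable := (to_countable N).image _
  have hB : B ∈ p' t := by
    by_contra hB
    refine pt_notMem_closure_of_eventually (hp' t) (hY.image h) ?_
      (Ultrafilter.eventually_not.2 hB) ?_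
    · rintro ⟨_, ⟨n, -, rfl⟩, hn⟩
      exact pt_cons_ne (fun s => (hp s).le_cofinite) n s (h.injective (hn.trans hst.symm))
    · rw [← hst, ← h.image_closure]
      exact mem_image_of_mem h (pt_mem_closure_image_pt_cons hN)
  let Z : Set (TreeSpace p) := h ⁻¹' ((fun m => pt p' (m :: t)) '' B)
  have hZY : Z ⊆ closure Y := by
    rintro x ⟨m, hm, hmx⟩
    have hx : h x ∈ closure (h '' Y) := hmx ▸ hm
    rwa [← h.image_closure, h.injective.mem_set_image] at hx
  refine pt_notMem_closure_of_subset_closure_range (hp s)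
    (((to_countable B).image _).preimage h.injective)
    (hZY.trans (closure_mono (image_subset_range _ _))) ?_ (fun n hn => ?_) ?_
  · rintro ⟨m, -, hm⟩
    exact pt_cons_ne (fun t => (hp' t).le_cofinite) m t (hm.trans hst)
  · exact pt_cons_mem_closure_image_iff.1 (hZY hn) (image_subset_range _ _ hn)
  · rw [← h.preimage_closure, mem_preimage, hst]
    exact pt_mem_closure_image_pt_cons hB

theorem exists_map_eq_of_homeomorph_pt (hp : ∀ s, IsWeakPPoint (p s))
    (hp' : ∀ t, IsWeakPPoint (p' t)) (h : TreeSpace p ≃ₜ TreeSpace p') {s : List S} {t : List T}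
    (hst : h (pt p s) = pt p' t) : ∃ g, (p s).map g = p' t := by
  obtain ⟨g, hg⟩ := (eventually_homeomorph_pt_cons_mem_range hp hp' h hst).choice
  have hlim : Tendsto (fun n => branchProj p' t (h (pt p (n :: s)))) (p s) (𝓝 (p' t)) := by
    rw [← branchProj_pt (p := p') t, ← hst]
    exact (((continuous_branchProj t).comp h.continuous).tendsto _).comp (tendsto_pt_cons s)
  have hpure : Tendsto (fun n => (pure (g n) : Ultrafilter T)) (p s) (𝓝 (p' t)) :=
    hlim.congr' (hg.mono fun n hn => by rw [← hn, branchProj_pt_cons])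
  exact ⟨g, tendsto_nhds_unique (tendsto_map'_iff.1 ((p s).map g).tendsto_pure_self) hpure⟩

theorem rkEquiv_of_homeomorph_pt (hp : ∀ s, IsWeakPPoint (p s))
    (hp' : ∀ t, IsWeakPPoint (p' t)) (h : TreeSpace p ≃ₜ TreeSpace p') {s : List S} {t : List T}
    (hst : h (pt p s) = pt p' t) : RKEquiv (p s) (p' t) :=
  ⟨exists_map_eq_of_homeomorph_pt hp hp' h hst,
    exists_map_eq_of_homeomorph_pt hp' hp h.symm (h.symm_apply_eq.2 hst.symm)⟩

theorem exists_rkEquiv_of_homeomorph (hp : ∀ s, IsWeakPPoint (p s))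
    (hp' : ∀ t, IsWeakPPoint (p' t)) (h : TreeSpace p ≃ₜ TreeSpace p') :
    ∃ s t, RKEquiv (p s) (p' t) := by
  obtain ⟨s, t, -, hst⟩ := exists_homeomorph_pt_eq_pt hp' h isOpen_univ ⟨pt p [], trivial⟩
  exact ⟨s, t, rkEquiv_of_homeomorph_pt hp hp' h hst⟩

theorem homeomorph_eq_refl (hp : ∀ s, IsWeakPPoint (p s))
    (hRK : ∀ s t, RKEquiv (p s) (p t) → s = t) (h : TreeSpace p ≃ₜ TreeSpace p) :
    h = Homeomorph.refl _ := by
  ext x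
  by_contra hx
  obtain ⟨s, t, hs, hst⟩ := exists_homeomorph_pt_eq_pt hp h
    (isOpen_ne_fun h.continuous continuous_id) ⟨x, hx⟩
  obtain rfl := hRK s t (rkEquiv_of_homeomorph_pt hp hp h hst)
  exact hs hst

end Homeomorphisms

end TreeSpace

section RingsOfContinuousFunctions

variable {X Y : Type*} [TopologicalSpace X] [TopologicalSpace Y]

theorem ringHom_algebraMap_real {A : Type*} [Semiring A] [Algebra ℝ A] (e : A →+* C(Y, ℝ))
    (r : ℝ) : e (algebraMap ℝ A r) = algebraMap ℝ C(Y, ℝ) r := by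
  ext y
  exact RingHom.congr_fun (Subsingleton.elim
    (((ContinuousMap.evalAlgHom ℝ ℝ y).toRingHom.comp e).comp (algebraMap ℝ A)) (RingHom.id ℝ)) r

/-- A ring homomorphism between rings of continuous real functions, regarded as a star algebra
homomorphism so that it acts on character spaces. -/
def continuousMapStarAlgHom (e : C(X, ℝ) →+* C(Y, ℝ)) : C(X, ℝ) →⋆ₐ[ℝ] C(Y, ℝ) :=
  { e with
    commutes' := ringHom_algebraMap_real e
    map_star' := fun f => by
      rw [star_trivial f]
      exact (star_trivial (e f)).symm }

open WeakDual.CharacterSpace in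
theorem nonempty_homeomorph_of_ringEquiv [CompactSpace X] [T2Space X] [CompactSpace Y] [T2Space Y]
    (e : C(X, ℝ) ≃+* C(Y, ℝ)) : Nonempty (X ≃ₜ Y) := by
  let pullback := compContinuousMap (continuousMapStarAlgHom e.symm.toRingHom)
  let pullbackInv := compContinuousMap (continuousMapStarAlgHom e.toRingHom)
  let h : WeakDual.characterSpace ℝ C(X, ℝ) ≃ₜ WeakDual.characterSpace ℝ C(Y, ℝ) :=
    { toFun := pullback
      invFun := pullbackInv
      left_inv := fun χ => by
        ext f
        exact congrArg χ (e.symm_apply_apply f)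
      right_inv := fun χ => by
        ext f
        exact congrArg χ (e.apply_symm_apply f)
      continuous_toFun := pullback.continuous
      continuous_invFun := pullbackInv.continuous }
  exact ⟨((homeoEval X ℝ).trans h).trans (homeoEval Y ℝ).symm⟩

end RingsOfContinuousFunctions

section CalkinAlgebras

variable {𝕜 E F : Type*} [NontriviallyNormedField 𝕜] [NormedAddCommGroup E] [NormedSpace 𝕜 E]
  [NormedAddCommGroup F] [NormedSpace 𝕜 F]

theorem mem_compactIdeal {f : E →L[𝕜] E} : f ∈ compactIdeal 𝕜 E ↔ IsCompactOperator f :=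
  TwoSidedIdeal.mem_mk' _ _ _ _ _ _ f

theorem isCompactOperator_conjContinuousAlgEquiv_iff (e : E ≃L[𝕜] F) {f : E →L[𝕜] E} :
    IsCompactOperator (e.conjContinuousAlgEquiv f) ↔ IsCompactOperator f := by
  refine ⟨fun h => ?_, fun h => (h.comp_clm (e.symm : F →L[𝕜] E)).clm_comp (e : E →L[𝕜] F)⟩
  rw [← e.conjContinuousAlgEquiv.symm_apply_apply f]
  exact (h.comp_clm (e : E →L[𝕜] F)).clm_comp (e.symm : F →L[𝕜] E)

theorem nonempty_ringEquiv_calkin_of_continuousLinearEquiv (e : E ≃L[𝕜] F) :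
    Nonempty (Calkin 𝕜 E ≃+* Calkin 𝕜 F) := by
  let conj : (E →L[𝕜] E) ≃+* (F →L[𝕜] F) := e.conjContinuousAlgEquiv.toAlgEquiv.toRingEquiv
  refine ⟨RingCon.congr conj (RingCon.ext fun f g => ?_)⟩
  change _ ↔ (compactIdeal 𝕜 F).ringCon (conj f) (conj g)
  rw [TwoSidedIdeal.rel_iff, TwoSidedIdeal.rel_iff, ← map_sub, mem_compactIdeal, mem_compactIdeal]
  exact (isCompactOperator_conjContinuousAlgEquiv_iff e).symm

end CalkinAlgebras

section SeparableBanachSpaces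

universe u

theorem nonempty_isometryEquiv_of_denseRange {ι E F : Type*} [MetricSpace E] [CompleteSpace E]
    [MetricSpace F] [CompleteSpace F] {f : ι → E} {g : ι → F} (hf : DenseRange f)
    (hg : DenseRange g) (h : ∀ i j, dist (f i) (f j) = dist (g i) (g j)) :
    Nonempty (E ≃ᵢ F) := by
  let : PseudoMetricSpace ι := PseudoMetricSpace.induced f inferInstance
  have isometry_f : Isometry f := Isometry.of_dist_eq fun _ _ => rfl
  have isometry_g : Isometry g := Isometry.of_dist_eq fun i j => (h i j).symm
  let cE : AbstractCompletion ι :=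
    ⟨E, f, inferInstance, inferInstance, inferInstance, isometry_f.isUniformInducing, hf⟩
  let cF : AbstractCompletion ι :=
    ⟨F, g, inferInstance, inferInstance, inferInstance, isometry_g.isUniformInducing, hg⟩
  let e : E ≃ᵤ F := cE.compareEquiv cF
  have he (i : ι) : e (f i) = g i := cE.compare_coe cF i
  have isometry_e : Isometry e := by
    have := e.continuous
    exact Isometry.of_dist_eq fun x y => hf.induction_on₂
      (isClosed_eq (by fun_prop) (by fun_prop)) (fun i j => by rw [he, he, h]) x y
  exact ⟨⟨e.toEquiv, isometry_e⟩⟩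

/-- The distances between the terms of the chosen dense sequence of a separable space. They
determine a separable Banach space up to isomorphism. -/
noncomputable def denseSeqDist (E : Type*) [MetricSpace E] [SeparableSpace E] [Nonempty E]
    (i j : ℕ) : ℝ :=
  dist (denseSeq E i) (denseSeq E j)

theorem nonempty_continuousLinearEquiv_of_denseSeqDist_eq {E F : Type*} [NormedAddCommGroup E]
    [NormedSpace ℝ E] [CompleteSpace E] [SeparableSpace E] [NormedAddCommGroup F] [NormedSpace ℝ F]
    [CompleteSpace F] [SeparableSpace F] (h : denseSeqDist E = denseSeqDist F) :
    Nonempty (E ≃L[ℝ] F) := by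
  obtain ⟨e⟩ := nonempty_isometryEquiv_of_denseRange (denseRange_denseSeq E)
    (denseRange_denseSeq F) (congrFun₂ h)
  exact ⟨e.toRealLinearIsometryEquiv.toContinuousLinearEquiv⟩

theorem mk_nat_nat_real_eq_continuum : #(ℕ → ℕ → ℝ) = 𝔠 := by simp [Cardinal.mk_real]

theorem exists_forall_isEmpty_ringEquiv_calkin {I : Type*} (hI : 𝔠 < #I) (X : I → Type*)
    [∀ i, TopologicalSpace (X i)] [∀ i, CompactSpace (X i)] [∀ i, T2Space (X i)]
    (hX : ∀ i j, (X i ≃ₜ X j) → i = j) :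
    ∃ i, ∀ (E : Type u) [NormedAddCommGroup E] [NormedSpace ℝ E] [CompleteSpace E],
      SeparableSpace E → IsEmpty (C(X i, ℝ) ≃+* Calkin ℝ E) := by
  by_contra! hcon
  choose E instNormed instSpace instComplete instSeparable e using hcon
  have hinj : Function.Injective fun i => denseSeqDist (E i) := fun i j hij => by
    obtain ⟨f⟩ := nonempty_continuousLinearEquiv_of_denseSeqDist_eq hij
    obtain ⟨g⟩ := nonempty_ringEquiv_calkin_of_continuousLinearEquiv f
    obtain ⟨h⟩ := nonempty_homeomorph_of_ringEquiv
      (((e i).some.trans g).trans (e j).some.symm)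
    exact hX i j h
  have hle := Cardinal.lift_mk_le_lift_mk_of_injective hinj
  rw [mk_nat_nat_real_eq_continuum, Cardinal.lift_continuum, Cardinal.lift_uzero] at hle
  exact hI.not_ge hle

end SeparableBanachSpaces

/-- There exists an infinite compact Hausdorff space `X` which is separable, extremally
disconnected, and rigid (the identity is the only self-homeomorphism of `X`), such that for
every separable real Banach space `E`, the Banach algebra `C(X, ℝ)` is not isomorphic as a
ring to the Calkin algebra `B(E)/K(E)`. -/
theorem statement4 :
    ∃ X : CompHaus.{u},
      Infinite X ∧ SeparableSpace X ∧ ExtremallyDisconnected X ∧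
      (∀ e : X ≃ₜ X, e = Homeomorph.refl X) ∧
      ∀ (E : Type u) [NormedAddCommGroup E] [NormedSpace ℝ E] [CompleteSpace E],
        SeparableSpace E →
        IsEmpty (C(X, ℝ) ≃+* Calkin ℝ E) := by
  obtain ⟨I, P, hI, hP, hRK⟩ := exists_family_isWeakPPoint (ULift.{u} ℕ)
  obtain ⟨i, hi⟩ := exists_forall_isEmpty_ringEquiv_calkin hI (fun i => TreeSpace (P i))
    fun i j h => by
      obtain ⟨s, t, hst⟩ := TreeSpace.exists_rkEquiv_of_homeomorph (hP i) (hP j) h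
      exact (hRK i j s t hst).1
  refine ⟨CompHaus.of (TreeSpace (P i)), ?_, ?_, ?_, ?_, hi⟩
  · exact TreeSpace.infinite fun s => (hP i s).le_cofinite
  · exact inferInstanceAs (SeparableSpace (TreeSpace (P i)))
  · exact inferInstanceAs (ExtremallyDisconnected (TreeSpace (P i)))
  · exact TreeSpace.homeomorph_eq_refl (hP i) fun s t hst => (hRK i i s t hst).2
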